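/- Let N ≥ 1 be an integer, β > 0 a real number, and w₁, …, w_N ∈ ℂ. Then 1 ≤ (1/π) ∫_ℂ exp(β U_S(z,w₁) + ⋯ + β U_S(z,w_N)) dA_S(z) ≤ 2e^{βN/2}/(2+βN), and the upper bound is attained with equality whenever w₁ = w₂ = ⋯ = w_N. -/

import Mathlib

open MeasureTheory

/-- The unipolar Green function of the sphere. -/
noncomputable def Usph (z w : ℂ) : ℝ :=
  1 / 2 + 1 / 2 * Real.log (‖z - w‖ ^ 2 / ((1 + ‖z‖ ^ 2) * (1 + ‖w‖ ^ 2)))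

/-!
In stereographic coordinates `U_S(z, w)` is a function of the squared chordal distance `q(z, w)`
alone, namely `(1 + log q) / 2`. Rotations of the sphere preserve both the normalised area and `q`,
and for `w = 0` polar coordinates show that `q` is uniformly distributed on `(0, 1)` (Archimedes),
so this holds for every pole `w`. Hence every `U_S(·, w)` has mean `∫₀¹ (1 + log s) / 2 ds = 0`
and exponential moment `∫₀¹ exp (t / 2) * s ^ (t / 2) ds = 2 exp (t / 2) / (2 + t)`. Jensen's
inequality over the sphere gives the lower bound, and Jensen's inequality over the finite convex
combination of poles gives the upper one.
-/

open Set ComplexConjugate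

section Jensen

variable {ι Ω : Type*} [Fintype ι] {p : ι → ℝ}

lemma exp_sum_mul_le_of_mem_stdSimplex (hp : p ∈ stdSimplex ℝ ι) (x : ι → ℝ) :
    Real.exp (∑ j, p j * x j) ≤ ∑ j, p j * Real.exp (x j) := by
  simpa using convexOn_exp.map_sum_le (fun j _ ↦ hp.1 j) hp.2 (fun j _ ↦ mem_univ (x j))

variable [MeasurableSpace Ω] {μ : Measure Ω} {X : ι → Ω → ℝ}

lemma integrable_exp_sum_mul (hp : p ∈ stdSimplex ℝ ι)
    (hX : ∀ j, Integrable (fun ω ↦ Real.exp (X j ω)) μ) :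
    Integrable (fun ω ↦ Real.exp (∑ j, p j * X j ω)) μ := by
  have hX_meas (j : ι) : AEMeasurable (X j) μ :=
    Real.aemeasurable_of_aemeasurable_exp (hX j).aemeasurable
  refine (integrable_finsetSum .univ fun j _ ↦ (hX j).const_mul (p j)).mono'
    (by fun_prop) (.of_forall fun ω ↦ ?_)
  simpa using exp_sum_mul_le_of_mem_stdSimplex hp (X · ω)

lemma integral_exp_sum_mul_le (hp : p ∈ stdSimplex ℝ ι)
    (hX : ∀ j, Integrable (fun ω ↦ Real.exp (X j ω)) μ) :
    ∫ ω, Real.exp (∑ j, p j * X j ω) ∂μ ≤ ∑ j, p j * ∫ ω, Real.exp (X j ω) ∂μ := by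
  have h_int (j : ι) : Integrable (fun ω ↦ p j * Real.exp (X j ω)) μ := (hX j).const_mul (p j)
  calc ∫ ω, Real.exp (∑ j, p j * X j ω) ∂μ
      ≤ ∫ ω, ∑ j, p j * Real.exp (X j ω) ∂μ :=
        integral_mono (integrable_exp_sum_mul hp hX) (integrable_finsetSum _ fun j _ ↦ h_int j)
          fun ω ↦ exp_sum_mul_le_of_mem_stdSimplex hp (X · ω)
    _ = ∑ j, p j * ∫ ω, Real.exp (X j ω) ∂μ := by
        simp only [integral_finsetSum _ fun j _ ↦ h_int j, integral_const_mul]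

lemma exp_integral_le_integral_exp [IsProbabilityMeasure μ] {Y : Ω → ℝ} (hY : Integrable Y μ)
    (hY_exp : Integrable (fun ω ↦ Real.exp (Y ω)) μ) :
    Real.exp (∫ ω, Y ω ∂μ) ≤ ∫ ω, Real.exp (Y ω) ∂μ :=
  convexOn_exp.map_integral_le Real.continuous_exp.continuousOn isClosed_univ
    (.of_forall fun ω ↦ mem_univ (Y ω)) hY hY_exp

end Jensen

section ChangeOfVariables

lemma lintegral_image_eq_lintegral_norm_deriv_sq_mul {f f' : ℂ → ℂ} {s : Set ℂ}
    (hs : MeasurableSet s) (hf' : ∀ z ∈ s, HasDerivWithinAt f (f' z) s z) (hf : InjOn f s)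
    (g : ℂ → ENNReal) :
    ∫⁻ z in f '' s, g z = ∫⁻ z in s, ENNReal.ofReal (‖f' z‖ ^ 2) * g (f z) := by
  rw [lintegral_image_eq_lintegral_abs_det_fderiv_mul volume hs
    (fun z hz ↦ (hf' z hz).hasFDerivWithinAt.restrictScalars ℝ) hf]
  simp [ContinuousLinearMap.det, LinearMap.det_restrictScalars, Algebra.norm_complex_eq,
    Complex.normSq_eq_norm_sq]

lemma lintegral_fun_norm_addHaar {E : Type*} [NormedAddCommGroup E] [NormedSpace ℝ E]
    [MeasurableSpace E] [BorelSpace E] [FiniteDimensional ℝ E] [Nontrivial E] (μ : Measure E)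
    [μ.IsAddHaarMeasure] {f : ℝ → ENNReal} (hf : Measurable f) :
    ∫⁻ x, f ‖x‖ ∂μ = Module.finrank ℝ E * μ (Metric.ball 0 1) *
      ∫⁻ r in Ioi (0 : ℝ), ENNReal.ofReal (r ^ (Module.finrank ℝ E - 1)) * f r :=
  calc ∫⁻ x, f ‖x‖ ∂μ
      = ∫⁻ x : ({0}ᶜ : Set E), f ‖x.1‖ ∂μ.comap (↑) := by
        rw [lintegral_subtype_comap (measurableSet_singleton _).compl fun x ↦ f ‖x‖,
          restrict_compl_singleton]
    _ = ∫⁻ x, f x.2 ∂μ.toSphere.prod (.volumeIoiPow (Module.finrank ℝ E - 1)) := by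
        simpa using μ.measurePreserving_homeomorphUnitSphereProd.lintegral_comp_emb
          (Homeomorph.measurableEmbedding _) (f ∘ Subtype.val ∘ Prod.snd)
    _ = μ.toSphere univ * ∫⁻ r : Ioi (0 : ℝ), f r ∂.volumeIoiPow (Module.finrank ℝ E - 1) := by
        rw [lintegral_prod _ (by fun_prop)]
        simp [mul_comm]
    _ = _ := by
        rw [μ.toSphere_apply_univ, Measure.volumeIoiPow,
          lintegral_withDensity_eq_lintegral_mul _ (by fun_prop) (by fun_prop)]
        congr 1
        exact lintegral_subtype_comap measurableSet_Ioi
          fun r ↦ ENNReal.ofReal (r ^ (Module.finrank ℝ E - 1)) * f r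

lemma bijOn_sq_div_one_add_sq :
    BijOn (fun r : ℝ ↦ r ^ 2 / (1 + r ^ 2)) (Ioi 0) (Ioo 0 1) := by
  refine InvOn.bijOn (f' := fun s ↦ √(s / (1 - s))) ⟨fun r hr ↦ ?_, fun s hs ↦ ?_⟩
    (fun r (hr : 0 < r) ↦ ⟨by positivity, (div_lt_one (by positivity)).2 (by linarith)⟩)
    fun s hs ↦ Real.sqrt_pos.2 (div_pos hs.1 (sub_pos.2 hs.2))
  · have : r ^ 2 / (1 + r ^ 2) / (1 - r ^ 2 / (1 + r ^ 2)) = r ^ 2 := by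
      field_simp
      ring
    simp only [this, Real.sqrt_sq (mem_Ioi.1 hr).le]
  · have h : 0 < 1 - s := sub_pos.2 hs.2
    simp only [Real.sq_sqrt (div_nonneg hs.1.le h.le)]
    field_simp
    ring

lemma hasDerivAt_sq_div_one_add_sq (r : ℝ) :
    HasDerivAt (fun r : ℝ ↦ r ^ 2 / (1 + r ^ 2)) (2 * r / (1 + r ^ 2) ^ 2) r := by
  have hsq : HasDerivAt (fun r : ℝ ↦ r ^ 2) (2 * r) r := by simpa using hasDerivAt_pow 2 r
  exact (hsq.fun_div (hsq.const_add 1) (by positivity)).congr_deriv (by ring)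

end ChangeOfVariables

section SphereRotation

/-- The squared chordal distance on the sphere of diameter `1`, in stereographic coordinates. -/
noncomputable def chordalDistSq (z w : ℂ) : ℝ :=
  ‖z - w‖ ^ 2 / ((1 + ‖z‖ ^ 2) * (1 + ‖w‖ ^ 2))

lemma Usph_eq_log_chordalDistSq (z w : ℂ) :
    Usph z w = 1 / 2 + 1 / 2 * Real.log (chordalDistSq z w) := rfl

lemma chordalDistSq_zero_right (z : ℂ) : chordalDistSq z 0 = ‖z‖ ^ 2 / (1 + ‖z‖ ^ 2) := by
  simp [chordalDistSq]

@[fun_prop]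
lemma measurable_chordalDistSq_left (w : ℂ) : Measurable (chordalDistSq · w) := by
  unfold chordalDistSq
  fun_prop

/-- The rotation of the sphere carrying `0` to `w`, as a Möbius transformation in stereographic
coordinates. The point carried to infinity receives the junk value `0`. -/
noncomputable def sphereRotation (w z : ℂ) : ℂ := (z + w) / (1 - conj w * z)

/-- The points of `ℂ` which `sphereRotation w` does not carry to infinity. -/
def sphereRotationDomain (w : ℂ) : Set ℂ := {z | 1 - conj w * z ≠ 0}

lemma sphereRotation_zero (w : ℂ) : sphereRotation w 0 = w := by
  simp [sphereRotation]

@[fun_prop]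
lemma measurable_sphereRotation (w : ℂ) : Measurable (sphereRotation w) := by
  unfold sphereRotation
  fun_prop

lemma zero_mem_sphereRotationDomain (w : ℂ) : 0 ∈ sphereRotationDomain w := by
  simp [sphereRotationDomain]

lemma measurableSet_sphereRotationDomain (w : ℂ) : MeasurableSet (sphereRotationDomain w) :=
  (isOpen_ne_fun (by fun_prop) (by fun_prop)).measurableSet

lemma sphereRotationDomain_ae_eq_univ (w : ℂ) :
    sphereRotationDomain w =ᵐ[volume] (univ : Set ℂ) := by
  rw [Filter.eventuallyEq_univ]
  filter_upwards [Measure.ae_ne volume (conj w)⁻¹] with z hz h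
  exact hz (eq_inv_of_mul_eq_one_right (sub_eq_zero.1 h).symm)

lemma one_add_ofReal_sq_ne_zero (r : ℝ) : (1 + r ^ 2 : ℂ) ≠ 0 := by
  exact_mod_cast (by positivity : 1 + r ^ 2 ≠ 0)

lemma norm_one_add_ofReal_sq (r : ℝ) : ‖(1 + r ^ 2 : ℂ)‖ = 1 + r ^ 2 := by
  exact_mod_cast Complex.norm_of_nonneg (by positivity : 0 ≤ 1 + r ^ 2)

variable {w z u : ℂ}

lemma one_sub_conj_neg_mul_sphereRotation (hz : z ∈ sphereRotationDomain w) :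
    1 - conj (-w) * sphereRotation w z = (1 + ‖w‖ ^ 2) / (1 - conj w * z) := by
  have hz : 1 - conj w * z ≠ 0 := hz
  rw [← Complex.conj_mul', map_neg, sphereRotation]
  field_simp
  ring

lemma mapsTo_sphereRotation (w : ℂ) :
    MapsTo (sphereRotation w) (sphereRotationDomain w) (sphereRotationDomain (-w)) := by
  intro z hz
  rw [sphereRotationDomain, mem_ofPred_eq, one_sub_conj_neg_mul_sphereRotation hz]
  exact div_ne_zero (one_add_ofReal_sq_ne_zero ‖w‖) hz

lemma leftInvOn_sphereRotation_neg (w : ℂ) :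
    LeftInvOn (sphereRotation (-w)) (sphereRotation w) (sphereRotationDomain w) := by
  intro z hz
  have hw := one_add_ofReal_sq_ne_zero ‖w‖
  rw [sphereRotation, one_sub_conj_neg_mul_sphereRotation hz, div_eq_iff (div_ne_zero hw hz)]
  rw [← Complex.conj_mul', sphereRotation, div_add' _ _ _ hz, mul_div_assoc']
  ring

lemma bijOn_sphereRotation (w : ℂ) :
    BijOn (sphereRotation w) (sphereRotationDomain w) (sphereRotationDomain (-w)) :=
  InvOn.bijOn ⟨leftInvOn_sphereRotation_neg w, by simpa using leftInvOn_sphereRotation_neg (-w)⟩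
    (mapsTo_sphereRotation w) (by simpa using mapsTo_sphereRotation (-w))

lemma hasDerivAt_sphereRotation (hz : z ∈ sphereRotationDomain w) :
    HasDerivAt (sphereRotation w) ((1 + ‖w‖ ^ 2) / (1 - conj w * z) ^ 2) z := by
  have h_num : HasDerivAt (fun z : ℂ ↦ z + w) 1 z := (hasDerivAt_id z).add_const w
  have h_den : HasDerivAt (fun z : ℂ ↦ 1 - conj w * z) (-conj w) z := by
    simpa using ((hasDerivAt_id z).const_mul (conj w)).const_sub 1
  refine (h_num.fun_div h_den hz).congr_deriv ?_
  rw [← Complex.conj_mul']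
  ring

lemma one_add_norm_sphereRotation_sq (hz : z ∈ sphereRotationDomain w) :
    1 + ‖sphereRotation w z‖ ^ 2 =
      (1 + ‖z‖ ^ 2) * (1 + ‖w‖ ^ 2) / ‖1 - conj w * z‖ ^ 2 := by
  have hz : ‖1 - conj w * z‖ ^ 2 ≠ 0 := pow_ne_zero _ (norm_ne_zero_iff.2 hz)
  have key : ‖1 - conj w * z‖ ^ 2 + ‖z + w‖ ^ 2 = (1 + ‖z‖ ^ 2) * (1 + ‖w‖ ^ 2) := by
    simp only [← Complex.normSq_eq_norm_sq, Complex.normSq_apply]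
    simp
    ring
  rw [sphereRotation, norm_div, div_pow, ← key, add_div, div_self hz]

lemma sphereRotation_sub (hz : z ∈ sphereRotationDomain w) (hu : u ∈ sphereRotationDomain w) :
    sphereRotation w z - sphereRotation w u =
      (z - u) * (1 + ‖w‖ ^ 2) / ((1 - conj w * z) * (1 - conj w * u)) := by
  rw [← Complex.conj_mul', sphereRotation, sphereRotation, div_sub_div _ _ hz hu]
  ring

lemma chordalDistSq_sphereRotation (hz : z ∈ sphereRotationDomain w)
    (hu : u ∈ sphereRotationDomain w) :
    chordalDistSq (sphereRotation w z) (sphereRotation w u) = chordalDistSq z u := by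
  have hz' : ‖1 - conj w * z‖ ≠ 0 := norm_ne_zero_iff.2 hz
  have hu' : ‖1 - conj w * u‖ ≠ 0 := norm_ne_zero_iff.2 hu
  simp only [chordalDistSq, one_add_norm_sphereRotation_sq hz, one_add_norm_sphereRotation_sq hu,
    sphereRotation_sub hz hu, norm_div, norm_mul, norm_one_add_ofReal_sq]
  generalize ‖1 - conj w * z‖ = a, ‖1 - conj w * u‖ = b at hz' hu'
  field_simp

end SphereRotation

section SphericalProb

/-- The density with respect to Lebesgue measure of the normalised spherical area `dA_S / π`. -/
noncomputable def sphericalDensity (z : ℂ) : ℝ := 1 / Real.pi * (1 / (1 + ‖z‖ ^ 2) ^ 2)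

/-- The rotation-invariant probability measure of the sphere, in stereographic coordinates. -/
noncomputable def sphericalProb : Measure ℂ :=
  volume.withDensity fun z ↦ ENNReal.ofReal (sphericalDensity z)

lemma sphericalDensity_nonneg (z : ℂ) : 0 ≤ sphericalDensity z := by
  unfold sphericalDensity
  positivity

@[fun_prop]
lemma measurable_sphericalDensity : Measurable sphericalDensity := by
  unfold sphericalDensity
  fun_prop

lemma lintegral_sphericalProb {g : ℂ → ENNReal} (hg : Measurable g) :
    ∫⁻ z, g z ∂sphericalProb = ∫⁻ z, ENNReal.ofReal (sphericalDensity z) * g z :=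
  lintegral_withDensity_eq_lintegral_mul _ (by fun_prop) hg

lemma integral_sphericalProb (g : ℂ → ℝ) :
    ∫ z, g z ∂sphericalProb = 1 / Real.pi * ∫ z, g z * (1 / (1 + ‖z‖ ^ 2) ^ 2) := by
  rw [sphericalProb, integral_withDensity_eq_integral_toReal_smul (by fun_prop) (by simp),
    ← integral_const_mul]
  congr with z
  rw [ENNReal.toReal_ofReal (sphericalDensity_nonneg z), sphericalDensity, smul_eq_mul]
  ring

lemma norm_deriv_sq_mul_sphericalDensity_sphereRotation {w z : ℂ}
    (hz : z ∈ sphereRotationDomain w) :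
    ‖(1 + ‖w‖ ^ 2) / (1 - conj w * z) ^ 2‖ ^ 2 * sphericalDensity (sphereRotation w z) =
      sphericalDensity z := by
  have hz' : ‖1 - conj w * z‖ ≠ 0 := norm_ne_zero_iff.2 hz
  rw [sphericalDensity, sphericalDensity, one_add_norm_sphereRotation_sq hz, norm_div, norm_pow,
    norm_one_add_ofReal_sq]
  field_simp

lemma measurePreserving_sphereRotation (w : ℂ) :
    MeasurePreserving (sphereRotation w) sphericalProb sphericalProb := by
  refine ⟨by fun_prop, Measure.ext_of_lintegral _ fun g hg ↦ ?_⟩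
  let ρ (z : ℂ) : ENNReal := ENNReal.ofReal (sphericalDensity z)
  calc ∫⁻ z, g z ∂sphericalProb.map (sphereRotation w)
      = ∫⁻ z in sphereRotationDomain w, ρ z * g (sphereRotation w z) := by
        rw [lintegral_map hg (by fun_prop), lintegral_sphericalProb (by fun_prop),
          setLIntegral_congr (sphereRotationDomain_ae_eq_univ w), setLIntegral_univ]
    _ = ∫⁻ z in sphereRotationDomain w,
          ENNReal.ofReal (‖(1 + ‖w‖ ^ 2) / (1 - conj w * z) ^ 2‖ ^ 2) *
            (ρ (sphereRotation w z) * g (sphereRotation w z)) := by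
        refine setLIntegral_congr_fun (measurableSet_sphereRotationDomain w) fun z hz ↦ ?_
        simp only [ρ]
        rw [← mul_assoc, ← ENNReal.ofReal_mul (by positivity),
          norm_deriv_sq_mul_sphericalDensity_sphereRotation hz]
    _ = ∫⁻ z in sphereRotationDomain (-w), ρ z * g z := by
        rw [← (bijOn_sphereRotation w).image_eq, lintegral_image_eq_lintegral_norm_deriv_sq_mul
          (measurableSet_sphereRotationDomain w)
          (fun z hz ↦ (hasDerivAt_sphereRotation hz).hasDerivWithinAt)
          (bijOn_sphereRotation w).injOn]
    _ = ∫⁻ z, g z ∂sphericalProb := by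
        rw [setLIntegral_congr (sphereRotationDomain_ae_eq_univ (-w)), setLIntegral_univ,
          lintegral_sphericalProb hg]

lemma measurePreserving_chordalDistSq_zero :
    MeasurePreserving (chordalDistSq · 0) sphericalProb (volume.restrict (Ioo 0 1)) := by
  refine ⟨by fun_prop, Measure.ext_of_lintegral _ fun g hg ↦ ?_⟩
  let ρ (r : ℝ) : ENNReal := ENNReal.ofReal (1 / Real.pi * (1 / (1 + r ^ 2) ^ 2))
  have h_jac {r : ℝ} (hr : 0 < r) : 2 * ENNReal.ofReal Real.pi * (ENNReal.ofReal r * ρ r) =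
      ENNReal.ofReal |2 * r / (1 + r ^ 2) ^ 2| := by
    rw [abs_of_nonneg (by positivity), ← ENNReal.ofReal_mul hr.le, ← ENNReal.ofReal_ofNat 2,
      ← ENNReal.ofReal_mul zero_le_two, ← ENNReal.ofReal_mul (by positivity)]
    congr 1
    field_simp
  calc ∫⁻ s, g s ∂sphericalProb.map (chordalDistSq · 0)
      = ∫⁻ z : ℂ, ρ ‖z‖ * g (‖z‖ ^ 2 / (1 + ‖z‖ ^ 2)) := by
        rw [lintegral_map hg (by fun_prop), lintegral_sphericalProb (by fun_prop)]
        simp only [chordalDistSq_zero_right, sphericalDensity, ρ]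
    _ = 2 * ENNReal.ofReal Real.pi *
          ∫⁻ r in Ioi 0, ENNReal.ofReal r * (ρ r * g (r ^ 2 / (1 + r ^ 2))) := by
        rw [lintegral_fun_norm_addHaar volume (f := fun r ↦ ρ r * g (r ^ 2 / (1 + r ^ 2)))
          (by fun_prop)]
        simp [Complex.volume_ball, ← ENNReal.ofReal_coe_nnreal]
    _ = ∫⁻ r in Ioi 0, ENNReal.ofReal |2 * r / (1 + r ^ 2) ^ 2| * g (r ^ 2 / (1 + r ^ 2)) := by
        rw [← lintegral_const_mul _ (by fun_prop)]
        refine setLIntegral_congr_fun measurableSet_Ioi fun r hr ↦ ?_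
        simp only [← h_jac hr, mul_assoc]
    _ = ∫⁻ s in Ioo 0 1, g s := by
        rw [← bijOn_sq_div_one_add_sq.image_eq, lintegral_image_eq_lintegral_abs_deriv_mul
          measurableSet_Ioi (fun r _ ↦ (hasDerivAt_sq_div_one_add_sq r).hasDerivWithinAt)
          bijOn_sq_div_one_add_sq.injOn]

theorem measurePreserving_chordalDistSq (w : ℂ) :
    MeasurePreserving (chordalDistSq · w) sphericalProb (volume.restrict (Ioo 0 1)) := by
  have h_inv : (chordalDistSq · w) ∘ sphereRotation w =ᵐ[sphericalProb] (chordalDistSq · 0) := by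
    have h_ae : ∀ᵐ z ∂sphericalProb, z ∈ sphereRotationDomain w :=
      (withDensity_absolutelyContinuous _ _).ae_le
        (Filter.eventuallyEq_univ.1 (sphereRotationDomain_ae_eq_univ w))
    filter_upwards [h_ae] with z hz
    simpa [sphereRotation_zero] using
      chordalDistSq_sphereRotation hz (zero_mem_sphereRotationDomain w)
  refine ⟨by fun_prop, ?_⟩
  rw [← (measurePreserving_sphereRotation w).map_eq, Measure.map_map (by fun_prop) (by fun_prop),
    Measure.map_congr h_inv, measurePreserving_chordalDistSq_zero.map_eq]

instance : IsProbabilityMeasure sphericalProb where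
  measure_univ := by
    simpa using (measurePreserving_chordalDistSq 0).measure_preimage
      MeasurableSet.univ.nullMeasurableSet

variable {E : Type*} [NormedAddCommGroup E] {g : ℝ → E}

lemma integrable_comp_chordalDistSq (w : ℂ) (hg : IntervalIntegrable g volume 0 1) :
    Integrable (fun z ↦ g (chordalDistSq z w)) sphericalProb :=
  (measurePreserving_chordalDistSq w).integrable_comp_of_integrable
    ((intervalIntegrable_iff_integrableOn_Ioo_of_le zero_le_one).1 hg)

lemma integral_comp_chordalDistSq [NormedSpace ℝ E] (w : ℂ) (hg : StronglyMeasurable g) :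
    ∫ z, g (chordalDistSq z w) ∂sphericalProb = ∫ s in (0 : ℝ)..1, g s := by
  rw [intervalIntegral.integral_of_le zero_le_one, integral_Ioc_eq_integral_Ioo,
    ← (measurePreserving_chordalDistSq w).map_eq,
    integral_map (by fun_prop) hg.aestronglyMeasurable]

end SphericalProb

section GreenFunction

lemma intervalIntegrable_half_add_half_log (a b : ℝ) :
    IntervalIntegrable (fun s ↦ 1 / 2 + 1 / 2 * Real.log s) volume a b :=
  intervalIntegrable_const.add (intervalIntegral.intervalIntegrable_log'.const_mul _)

lemma integral_half_add_half_log : ∫ s in (0 : ℝ)..1, (1 / 2 + 1 / 2 * Real.log s) = 0 := by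
  rw [intervalIntegral.integral_add intervalIntegrable_const
    (intervalIntegral.intervalIntegrable_log'.const_mul _)]
  norm_num

lemma exp_mul_half_add_half_log {s : ℝ} (hs : 0 < s) (t : ℝ) :
    Real.exp (t * (1 / 2 + 1 / 2 * Real.log s)) = Real.exp (t / 2) * s ^ (t / 2) := by
  rw [Real.rpow_def_of_pos hs, ← Real.exp_add]
  ring_nf

variable {t : ℝ}

lemma intervalIntegrable_exp_mul_half_add_half_log (ht : -2 < t) :
    IntervalIntegrable (fun s ↦ Real.exp (t * (1 / 2 + 1 / 2 * Real.log s))) volume 0 1 := by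
  have h_rpow : IntervalIntegrable (fun s : ℝ ↦ Real.exp (t / 2) * s ^ (t / 2)) volume 0 1 :=
    (intervalIntegral.intervalIntegrable_rpow' (by linarith)).const_mul _
  refine h_rpow.congr fun s hs ↦ ?_
  rw [uIoc_of_le zero_le_one] at hs
  exact (exp_mul_half_add_half_log hs.1 t).symm

lemma integral_exp_mul_half_add_half_log (ht : -2 < t) :
    ∫ s in (0 : ℝ)..1, Real.exp (t * (1 / 2 + 1 / 2 * Real.log s)) =
      2 * Real.exp (t / 2) / (2 + t) := by
  have ht' : t / 2 + 1 ≠ 0 := by linarith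
  calc ∫ s in (0 : ℝ)..1, Real.exp (t * (1 / 2 + 1 / 2 * Real.log s))
      = ∫ s in (0 : ℝ)..1, Real.exp (t / 2) * s ^ (t / 2) :=
        intervalIntegral.integral_congr_Ioo_of_le zero_le_one
          fun s hs ↦ exp_mul_half_add_half_log hs.1 t
    _ = Real.exp (t / 2) * (1 / (t / 2 + 1)) := by
        rw [intervalIntegral.integral_const_mul, integral_rpow (.inl (by linarith)),
          Real.one_rpow, Real.zero_rpow ht', sub_zero]
    _ = 2 * Real.exp (t / 2) / (2 + t) := by
        rw [show t / 2 + 1 = (2 + t) / 2 by ring]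
        field_simp

lemma integrable_Usph (w : ℂ) : Integrable (Usph · w) sphericalProb :=
  integrable_comp_chordalDistSq (g := fun s ↦ 1 / 2 + 1 / 2 * Real.log s) w
    (intervalIntegrable_half_add_half_log 0 1)

lemma integral_Usph (w : ℂ) : ∫ z, Usph z w ∂sphericalProb = 0 := by
  simp only [Usph_eq_log_chordalDistSq]
  rw [integral_comp_chordalDistSq (g := fun s ↦ 1 / 2 + 1 / 2 * Real.log s) w
    (Measurable.stronglyMeasurable (by fun_prop)), integral_half_add_half_log]

lemma integrable_exp_mul_Usph (ht : -2 < t) (w : ℂ) :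
    Integrable (fun z ↦ Real.exp (t * Usph z w)) sphericalProb :=
  integrable_comp_chordalDistSq (g := fun s ↦ Real.exp (t * (1 / 2 + 1 / 2 * Real.log s))) w
    (intervalIntegrable_exp_mul_half_add_half_log ht)

lemma integral_exp_mul_Usph (ht : -2 < t) (w : ℂ) :
    ∫ z, Real.exp (t * Usph z w) ∂sphericalProb = 2 * Real.exp (t / 2) / (2 + t) := by
  simp only [Usph_eq_log_chordalDistSq]
  rw [integral_comp_chordalDistSq (g := fun s ↦ Real.exp (t * (1 / 2 + 1 / 2 * Real.log s))) w
    (Measurable.stronglyMeasurable (by fun_prop)), integral_exp_mul_half_add_half_log ht]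

end GreenFunction

theorem Usph_exp_sum_bounds_general {ι : Type*} [Fintype ι] {p : ι → ℝ}
    (hp : p ∈ stdSimplex ℝ ι) {t : ℝ} (ht : -2 < t) (w : ι → ℂ) :
    1 ≤ 1 / Real.pi *
        ∫ z : ℂ, Real.exp (t * ∑ j, p j * Usph z (w j)) * (1 / (1 + ‖z‖ ^ 2) ^ 2) ∧
    1 / Real.pi *
        ∫ z : ℂ, Real.exp (t * ∑ j, p j * Usph z (w j)) * (1 / (1 + ‖z‖ ^ 2) ^ 2) ≤
      2 * Real.exp (t / 2) / (2 + t) ∧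
    ((∀ j k, w j = w k) →
      1 / Real.pi *
          ∫ z : ℂ, Real.exp (t * ∑ j, p j * Usph z (w j)) * (1 / (1 + ‖z‖ ^ 2) ^ 2) =
        2 * Real.exp (t / 2) / (2 + t)) := by
  have h_sum (z : ℂ) : t * ∑ j, p j * Usph z (w j) = ∑ j, p j * (t * Usph z (w j)) := by
    simp only [Finset.mul_sum, mul_left_comm]
  simp only [← integral_sphericalProb, h_sum]
  have h_exp (j : ι) := integrable_exp_mul_Usph ht (w j)
  have h_mul (j : ι) : Integrable (fun z ↦ p j * (t * Usph z (w j))) sphericalProb :=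
    ((integrable_Usph (w j)).const_mul t).const_mul (p j)
  refine ⟨?_, ?_, fun hw ↦ ?_⟩
  · have h_mean : ∫ z, ∑ j, p j * (t * Usph z (w j)) ∂sphericalProb = 0 := by
      simp [integral_finsetSum _ fun j _ ↦ h_mul j, integral_const_mul, integral_Usph]
    simpa only [h_mean, Real.exp_zero] using exp_integral_le_integral_exp
      (integrable_finsetSum _ fun j _ ↦ h_mul j) (integrable_exp_sum_mul hp h_exp)
  · refine (integral_exp_sum_mul_le hp h_exp).trans_eq ?_
    simp only [integral_exp_mul_Usph ht, ← Finset.sum_mul, hp.2, one_mul]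
  · obtain ⟨k, -, -⟩ := Finset.exists_ne_zero_of_sum_ne_zero (hp.2.trans_ne one_ne_zero)
    simp only [hw _ k, ← Finset.sum_mul, hp.2, one_mul, integral_exp_mul_Usph ht]

/-- bounds for the exponential of a sum of unipolar Green functions
on the sphere, with equality in the upper bound when all points coincide. -/
theorem Usph_exp_sum_bounds (N : ℕ) (hN : 1 ≤ N) (β : ℝ) (hβ : 0 < β)
    (w : Fin N → ℂ) :
    1 ≤ 1 / Real.pi *
        ∫ z : ℂ, Real.exp (∑ j, β * Usph z (w j)) * (1 / (1 + ‖z‖ ^ 2) ^ 2) ∧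
    1 / Real.pi *
        ∫ z : ℂ, Real.exp (∑ j, β * Usph z (w j)) * (1 / (1 + ‖z‖ ^ 2) ^ 2) ≤
      2 * Real.exp (β * N / 2) / (2 + β * N) ∧
    ((∀ j k, w j = w k) →
      1 / Real.pi *
          ∫ z : ℂ, Real.exp (∑ j, β * Usph z (w j)) * (1 / (1 + ‖z‖ ^ 2) ^ 2) =
        2 * Real.exp (β * N / 2) / (2 + β * N)) := by
  have hN' : (N : ℝ) ≠ 0 := by positivity
  have hp : (fun _ ↦ (N : ℝ)⁻¹) ∈ stdSimplex ℝ (Fin N) := ⟨fun _ ↦ by positivity, by simp [hN']⟩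
  have ht : -2 < β * N := by linarith [show 0 ≤ β * N by positivity]
  simpa only [← Finset.mul_sum, ← mul_assoc, mul_inv_cancel_right₀ hN']
    using Usph_exp_sum_bounds_general hp ht w
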